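/- arXiv:1204.5311 — 6 statements merged into one kernel-verified Lean document; each statement's English description precedes it below -/
import Mathlib

section
/- Let A be a finitely generated locally indicable group, let φ : A → ℤ be a surjective homomorphism, let a ∈ A with φ(a) = 1, and let n > 0 be an integer. Let Â = A ∗_{⟨a = αⁿ⟩} ⟨α⟩ be the group obtained from A by adjoining an n-th root α of a, i.e. the pushout of the homomorphisms ℤ → A, 1 ↦ a, and ℤ → ℤ, 1 ↦ n. Then Â is locally indicable. -/
/-- A group `G` is locally indicable if every non-trivial finitely generated
subgroup of `G` admits a surjective homomorphism onto `ℤ`. -/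
def LocallyIndicable (G : Type*) [Group G] : Prop :=
  ∀ H : Subgroup G, H.FG → H ≠ ⊥ → ∃ f : H →* Multiplicative ℤ, Function.Surjective f

namespace LIproof

open Monoid

theorem surj_of_ne {H : Type*} [Group H] (f : H →* Multiplicative ℤ) (h0 : H) (h : f h0 ≠ 1) :
    ∃ g : H →* Multiplicative ℤ, Function.Surjective g := by
  obtain ⟨d, hd⟩ := Int.subgroup_cyclic (MonoidHom.toAdditiveLeft f).range
  have hdvd : ∀ x : H, ∃ c : ℤ, (f x).toAdd = c * d := by
    intro x
    have : (f x).toAdd ∈ (MonoidHom.toAdditiveLeft f).range := ⟨Additive.ofMul x, rfl⟩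
    rw [hd, AddSubgroup.mem_closure_singleton] at this
    obtain ⟨c, hc⟩ := this
    exact ⟨c, by simpa using hc.symm⟩
  have hd0 : d ≠ 0 := by
    rintro rfl
    obtain ⟨c, hc⟩ := hdvd h0
    apply h
    apply Multiplicative.toAdd.injective
    simpa using hc
  choose c hc using hdvd
  refine ⟨MonoidHom.mk' (fun x => Multiplicative.ofAdd (c x)) ?_, ?_⟩
  · intro x y
    apply Multiplicative.toAdd.injective
    simp only [toAdd_ofAdd, toAdd_mul]
    apply mul_right_cancel₀ hd0
    rw [add_mul, ← hc, ← hc, ← hc, map_mul, toAdd_mul]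
  · intro z
    have : d ∈ (MonoidHom.toAdditiveLeft f).range := by
      rw [hd]; exact AddSubgroup.subset_closure rfl
    obtain ⟨x, hx⟩ := this
    have hx' : (f x.toMul).toAdd = d := hx
    refine ⟨x.toMul ^ z.toAdd, ?_⟩
    rw [map_zpow]
    apply Multiplicative.toAdd.injective
    have : c x.toMul = 1 := by
      apply mul_right_cancel₀ hd0
      rw [← hc, hx', one_mul]
    simp [this]

theorem surj_of_hom {H Q : Type*} [Group H] [Group Q] (hH : Group.FG H) (hQ : LocallyIndicable Q)
    (f : H →* Q) (h0 : H) (h : f h0 ≠ 1) :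
    ∃ g : H →* Multiplicative ℤ, Function.Surjective g := by
  have h1 : f.range.FG := by
    rw [← Group.fg_iff_subgroup_fg]
    exact Group.fg_range f
  have h2 : f.range ≠ ⊥ := by
    intro hb
    apply h
    rw [← Subgroup.mem_bot, ← hb]
    exact ⟨h0, rfl⟩
  obtain ⟨g, hg⟩ := hQ _ h1 h2
  exact ⟨g.comp f.rangeRestrict, hg.comp f.rangeRestrict_surjective⟩

section rep

theorem end_mul {M : Type*} [AddCommMonoid M] (f g : AddMonoid.End M) (x : M) :
    (f * g) x = f (g x) := rfl

variable {I K : Type} [Group K]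

/-- The coefficient space. -/
abbrev V (K : Type) := ℕ → (ℕ → K) → ℤ

open Classical in
/-- action of a letter -/
noncomputable def T (e : ℕ → Option I) (he : ∀ s i, e s = some i → e (s+1) ≠ some i) (i : I) :
    K →* AddMonoid.End (V K) where
  toFun k :=
    { toFun := fun v s p => if e s = some i then
          v s (p * Pi.mulSingle s k) + v (s+1) (p * Pi.mulSingle s k) - v (s+1) p
        else v s p
      map_zero' := by
        funext s p; simp
      map_add' := by
        intro v w; funext s p
        simp only [Pi.add_apply]
        split_ifs <;> ring }
  map_one' := by
    ext v s p
    change (if e s = some i then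
          v s (p * Pi.mulSingle s 1) + v (s+1) (p * Pi.mulSingle s 1) - v (s+1) p
        else v s p) = v s p
    simp
  map_mul' := by
    intro k l
    ext v s p
    let t : K → V K → V K := fun k v s p => if e s = some i then
          v s (p * Pi.mulSingle s k) + v (s+1) (p * Pi.mulSingle s k) - v (s+1) p
        else v s p
    change t (k * l) v s p = t k (t l v) s p
    simp only [t]
    split_ifs with h1 h2
    · exact absurd h2 (he _ _ h1)
    · simp only [Pi.mulSingle_mul, mul_assoc]; ring
    · rfl

theorem T_pos (e : ℕ → Option I) (he : ∀ s i, e s = some i → e (s+1) ≠ some i) (i : I)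
    (k : K) (v : V K) (s : ℕ) (p : ℕ → K) (h : e s = some i) : 
    T e he i k v s p =
      v s (p * Pi.mulSingle s k) + v (s+1) (p * Pi.mulSingle s k) - v (s+1) p := if_pos h

theorem T_neg (e : ℕ → Option I) (he : ∀ s i, e s = some i → e (s+1) ≠ some i) (i : I)
    (k : K) (v : V K) (s : ℕ) (p : ℕ → K) (h : e s ≠ some i) : 
    T e he i k v s p = v s p := if_neg h

/-- The representation. -/
noncomputable def F (e : ℕ → Option I) (he : ∀ s i, e s = some i → e (s+1) ≠ some i) :
    CoprodI (fun _ : I => K) →* AddMonoid.End (V K) :=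
  CoprodI.lift (T e he)

open Classical in
/-- projection to a factor -/
noncomputable def proj (i : I) : CoprodI (fun _ : I => K) →* K :=
  CoprodI.lift (fun j => if j = i then MonoidHom.id K else 1)

/-- projection to a factor, optional -/
noncomputable def oproj (o : Option I) : CoprodI (fun _ : I => K) →* K :=
  match o with
  | none => 1
  | some i => proj i

theorem F_tri (e : ℕ → Option I) (he : ∀ s i, e s = some i → e (s+1) ≠ some i)
    (N : ℕ) (g : CoprodI (fun _ : I => K)) : ∀ (v : V K), (∀ t, N < t → v t = 0) →
    (∀ t, N < t → F e he g v t = 0) ∧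
    ∀ p, F e he g v N p = v N (p * Pi.mulSingle N (oproj (e N) g)) := by
  induction g using CoprodI.induction_on with
  | one => intro v hv; simpa using hv
  | of i k =>
    intro v hv
    simp only [F, CoprodI.lift_of]
    constructor
    · intro t ht
      funext p
      by_cases h : e t = some i
      · rw [T_pos _ _ _ _ _ _ _ h, hv t ht, hv (t+1) (by omega)]; simp
      · rw [T_neg _ _ _ _ _ _ _ h, hv t ht]
    · intro p
      by_cases h : e N = some i
      · rw [T_pos _ _ _ _ _ _ _ h, hv (N+1) (by omega), h]; simp [oproj, proj]
      · rw [T_neg _ _ _ _ _ _ _ h]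
        have : oproj (e N) (CoprodI.of (M := fun _ : I => K) (i := i) k) = 1 := by
          cases hN : e N with
          | none => rfl
          | some j =>
            have : i ≠ j := by rintro rfl; exact h hN
            simp [oproj, proj, this]
        rw [this]; simp
  | mul x y hx hy =>
    intro v hv
    rw [map_mul]
    simp only [end_mul]
    obtain ⟨h1, h2⟩ := hy v hv
    obtain ⟨h3, h4⟩ := hx _ h1
    refine ⟨h3, fun p => ?_⟩
    rw [h4, h2, map_mul, Pi.mulSingle_mul, mul_assoc]

theorem unipotent {H : Type} [Group H] (Φ : H →* AddMonoid.End (V K))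
    (hΦ : ∀ (N : ℕ) (h : H) (v : V K), (∀ t, N < t → v t = 0) →
      (∀ t, N ≤ t → (Φ h v - v) t = 0))
    (N : ℕ) (v : V K) (hv : ∀ t, N ≤ t → v t = 0) (h : H) (hne : Φ h v ≠ v) :
    ∃ (f : H →* Multiplicative ℤ) (h : H), f h ≠ 1 := by
  induction N generalizing v h with
  | zero =>
    exfalso
    apply hne
    have : v = 0 := by funext t; exact hv t (Nat.zero_le _)
    rw [this, map_zero]
  | succ N ih =>
    by_cases hex : ∃ (h : H) (w : V K), (∀ t, N ≤ t → w t = 0) ∧ Φ h w ≠ w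
    · obtain ⟨h', w, hw, hn⟩ := hex
      exact ih w hw h' hn
    · push Not at hex
      have hmem := fun g => hΦ N g v (fun t ht => hv t ht)
      have hadd : ∀ x y, Φ (x * y) v - v = (Φ x v - v) + (Φ y v - v) := by
        intro x y
        have := hex x _ (hmem y)
        rw [map_sub] at this
        rw [map_mul, end_mul]
        rw [← this]; abel
      have hne' : ∃ s p, (Φ h v - v) s p ≠ 0 := by
        by_contra hcon
        push Not at hcon
        apply hne
        rw [← sub_eq_zero]
        funext s p
        exact hcon s p
      obtain ⟨s, p, hsp⟩ := hne'
      refine ⟨MonoidHom.mk' (fun x => Multiplicative.ofAdd ((Φ x v - v) s p)) ?_, h, ?_⟩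
      · intro x y
        rw [hadd]; rfl
      · intro h1
        exact hsp h1

open Classical in
/-- the test vector -/
noncomputable def δ (m : ℕ) : V K := fun t p => if t = m ∧ p = 1 then 1 else 0

theorem word_act (e : ℕ → Option I) (he : ∀ s i, e s = some i → e (s+1) ≠ some i)
    (l : List (Σ _ : I, K)) : ∀ (r : ℕ), (∀ x ∈ l, x.2 ≠ 1) →
    (∀ j (hj : j < l.length), e (r + j) = some (l[j]).1) → 
    let u := F e he ((l.map fun x => CoprodI.of (M := fun _ : I => K) (i := x.1) x.2).prod)
      (δ (r + l.length))
    (∀ t < r, u t = 0) ∧ (∀ p : ℕ → K, (∃ t < r, p t ≠ 1) → u r p = 0) ∧ u r 1 ≠ 0 := by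
  induction l with
  | nil =>
    intro r _ _
    simp only [List.map_nil, List.prod_nil, map_one, List.length_nil, add_zero,
      AddMonoid.End.coe_one, id]
    refine ⟨?_, ?_, ?_⟩
    · intro t ht; funext p; simp [δ, ht.ne]
    · rintro p ⟨t, ht, hp⟩
      have : p ≠ 1 := by rintro rfl; exact hp rfl
      simp [δ, this]
    · simp [δ]
  | cons x l ih =>
    intro r hne hr
    have h := ih (r+1) (fun y hy => hne y (List.mem_cons_of_mem _ hy)) (by
      intro j hj
      have := hr (j+1) (by simpa using hj)
      rw [show r + 1 + j = r + (j+1) by omega, this]; simp)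
    have e1 : r + 1 + l.length = r + (x :: l).length := by simp; omega
    rw [e1] at h
    have hxr : e r = some x.1 := hr 0 (by simp)
    have hx1 : x.2 ≠ 1 := hne x (by simp)
    rw [List.map_cons, List.prod_cons, map_mul]
    simp only [end_mul]
    set w := F e he ((l.map fun x => CoprodI.of (M := fun _ : I => K) (i := x.1) x.2).prod)
      (δ (r + (x :: l).length)) with hw
    obtain ⟨h1, h2, h3⟩ := h
    have hF : F e he (CoprodI.of (M := fun _ : I => K) (i := x.1) x.2) = T e he x.1 x.2 := by
      simp [F]
    rw [hF]
    refine ⟨?_, ?_, ?_⟩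
    · intro t ht
      funext p
      by_cases h : e t = some x.1
      · rw [T_pos _ _ _ _ _ _ _ h, h1 t (by omega), h1 (t+1) (by omega)]; simp
      · rw [T_neg _ _ _ _ _ _ _ h, h1 t (by omega)]
    · rintro p ⟨t, ht, hp⟩
      rw [T_pos _ _ _ _ _ _ _ hxr, h1 r (by omega), h2 p ⟨t, by omega, hp⟩, h2 _ ⟨t, by omega, ?_⟩]
      · simp
      · simpa [Pi.mulSingle_eq_of_ne ht.ne] using hp
    · rw [T_pos _ _ _ _ _ _ _ hxr, h1 r (by omega), h2 _ ⟨r, by omega, ?_⟩]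
      · simpa using h3
      · simpa using hx1

theorem coprod_LI (hK : LocallyIndicable K) : LocallyIndicable (CoprodI (fun _ : I => K)) := by
  classical
  intro H hfg hne
  have hfg' : Group.FG H := (Group.fg_iff_subgroup_fg H).2 hfg
  by_cases hp : ∃ (i : I) (h : H), proj i h.1 ≠ 1
  · obtain ⟨i, h, hh⟩ := hp
    exact surj_of_hom hfg' hK ((proj i).comp H.subtype) h hh
  push Not at hp
  obtain ⟨g, hg⟩ := (Subgroup.ne_bot_iff_exists_ne_one (H := H)).1 hne
  have hg1 : g.1 ≠ 1 := fun h => hg (Subtype.ext h)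
  let w := CoprodI.Word.equiv g.1
  have hw : w.prod = g.1 := CoprodI.Word.equiv.symm_apply_apply g.1
  let e : ℕ → Option I := fun t => (w.toList[t]?).map Sigma.fst
  have he : ∀ s i, e s = some i → e (s+1) ≠ some i := by
    intro s i h1 h2
    simp only [e, Option.map_eq_some_iff] at h1 h2
    obtain ⟨x, hx, rfl⟩ := h1
    obtain ⟨y, hy, hxy⟩ := h2
    obtain ⟨hs, rfl⟩ := List.getElem?_eq_some_iff.1 hx
    obtain ⟨hs', rfl⟩ := List.getElem?_eq_some_iff.1 hy
    exact (List.isChain_iff_getElem.1 w.chain_ne s hs') hxy.symm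
  have key := word_act e he w.toList 0 (fun x hx => w.ne_one x hx) (by
    intro j hj
    simp [e, hj])
  have hact := key.2.2
  have hprod : (w.toList.map fun x => CoprodI.of (M := fun _ : I => K) (i := x.1) x.2).prod
    = g.1 := hw
  rw [hprod, zero_add] at hact
  have hlen : w.toList.length ≠ 0 := by
    intro h0
    apply hg1
    rw [← hprod, List.length_eq_zero_iff.1 h0]; rfl
  obtain ⟨f, h, hf⟩ := unipotent ((F e he).comp H.subtype) (by
    intro N h v hv t ht
    obtain ⟨h1, h2⟩ := F_tri e he N h.1 v hv
    change F e he h.1 v t - v t = 0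
    rcases ht.eq_or_lt with rfl | ht
    · have : oproj (e N) h.1 = 1 := by
        cases e N with
        | none => rfl
        | some i => exact hp i h
      funext p
      rw [Pi.sub_apply, h2, this]; simp
    · rw [h1 t ht, hv t ht, sub_zero]) (w.toList.length + 1) (δ w.toList.length) (by
    intro t ht
    funext p
    have : t ≠ w.toList.length := by omega
    simp [δ, this]) g (by
    intro heq
    change F e he g.1 _ = _ at heq
    rw [heq] at hact
    apply hact
    simp [δ, hlen.symm])
  exact surj_of_ne f h hf

end rep

section main

variable {A : Type} [Group A] (φ : A →* Multiplicative ℤ) (a : A) (n : ℕ)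

/-- index set -/
abbrev Idx (n : ℕ) := {r : ℤ // 0 ≤ r ∧ r < n}

/-- free product of copies of the kernel -/
abbrev G (n : ℕ) := CoprodI (fun _ : Idx n => φ.ker)

variable (hn : 0 < n)

/-- residue -/
def res (x : ℤ) : Idx n := ⟨x % n, Int.emod_nonneg _ (by omega), Int.emod_lt_of_pos _ (by omega)⟩

/-- the x-th copy -/
def c (x : ℤ) : φ.ker →* G φ n :=
  (CoprodI.of (M := fun _ : Idx n => φ.ker) (i := res n hn x)).comp
    (MulAut.conjNormal (H := φ.ker) (a ^ (x / n))).toMonoidHom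

theorem c_apply (x : ℤ) (k : φ.ker) : c φ a n hn x k =
  CoprodI.of (M := fun _ : Idx n => φ.ker) (i := res n hn x)
    (MulAut.conjNormal (H := φ.ker) (a ^ (x / n)) k) := rfl

theorem c_shift (x q : ℤ) (k : φ.ker) : c φ a n hn (x + n * q) k =
    c φ a n hn x (MulAut.conjNormal (a ^ q) k) := by
  rw [c_apply, c_apply]
  have h1 : res n hn (x + n * q) = res n hn x := by
    simp [res]
  rw [h1, Int.add_mul_ediv_left _ _ (by omega), zpow_add, map_mul]
  rfl

theorem c_idx (i : Idx n) (k : φ.ker) : c φ a n hn i.1 k =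
    CoprodI.of (M := fun _ : Idx n => φ.ker) (i := i) k := by
  rw [c_apply]
  have h1 : res n hn i.1 = i := by
    apply Subtype.ext
    exact Int.emod_eq_of_lt i.2.1 i.2.2
  rw [h1, Int.ediv_eq_zero_of_lt i.2.1 i.2.2]
  simp

/-- translation -/
def θ (z : ℤ) : G φ n →* G φ n := CoprodI.lift (fun i => c φ a n hn (i.1 + z))

theorem θ_c (z x : ℤ) (k : φ.ker) : θ φ a n hn z (c φ a n hn x k) = c φ a n hn (x + z) k := by
  rw [c_apply, θ, CoprodI.lift_of, ← c_shift]
  congr 2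
  have := Int.emod_add_mul_ediv x n
  change x % n + z + _ = _
  linarith

theorem θ_add (z w : ℤ) : (θ φ a n hn z).comp (θ φ a n hn w) = θ φ a n hn (z + w) := by
  apply CoprodI.ext_hom
  intro i
  ext1 k
  simp only [MonoidHom.comp_apply]
  rw [← c_idx φ a n hn, θ_c, θ_c, θ_c]
  congr 2; ring

theorem θ_zero : θ φ a n hn 0 = MonoidHom.id _ := by
  apply CoprodI.ext_hom
  intro i
  ext1 k
  simp only [MonoidHom.comp_apply]
  rw [← c_idx φ a n hn, θ_c, add_zero]
  rfl

/-- the action -/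
def Θ : Multiplicative ℤ →* MulAut (G φ n) where
  toFun z := MonoidHom.toMulEquiv (θ φ a n hn z.toAdd) (θ φ a n hn (-z.toAdd))
    (by rw [θ_add, neg_add_cancel, θ_zero]) (by rw [θ_add, add_neg_cancel, θ_zero])
  map_one' := by
    ext x
    exact DFunLike.congr_fun (θ_zero φ a n hn) x
  map_mul' z w := by
    ext x
    exact (DFunLike.congr_fun (θ_add φ a n hn z.toAdd w.toAdd) x).symm

theorem Θ_apply (z : Multiplicative ℤ) (x : G φ n) : Θ φ a n hn z x = θ φ a n hn z.toAdd x := rfl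

variable (ha : φ a = Multiplicative.ofAdd 1)

/-- kernel part -/
def kp (x : A) : φ.ker := ⟨x * a ^ (-(φ x).toAdd), by
  rw [MonoidHom.mem_ker, map_mul, map_zpow, ha]
  apply Multiplicative.toAdd.injective
  simp⟩

/-- A into the semidirect product -/
def fA : A →* G φ n ⋊[Θ φ a n hn] Multiplicative ℤ :=
  MonoidHom.mk' (fun x => ⟨c φ a n hn 0 (kp φ a ha x), Multiplicative.ofAdd (n * (φ x).toAdd)⟩) (by
    intro x y
    apply SemidirectProduct.ext
    · simp only [SemidirectProduct.mul_left]
      rw [Θ_apply, θ_c, toAdd_ofAdd, c_shift, ← map_mul]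
      congr 1
      apply Subtype.ext
      simp only [kp, Subgroup.coe_mul, MulAut.conjNormal_apply, map_mul, toAdd_mul]
      group
    · simp only [SemidirectProduct.mul_right, map_mul, toAdd_mul, mul_add, ofAdd_add])

end main

end LIproof

open LIproof

/-- Let `A` be a finitely generated locally indicable group, `φ : A → ℤ` a
surjective homomorphism, `a ∈ A` with `φ a = 1` and `n > 0`.  Let `Â` be the
group obtained from `A` by adjoining an `n`-th root `α` of `a`, i.e. the
pushout of `ℤ → A, 1 ↦ a` and `ℤ → ℤ, 1 ↦ n`; it is presented here as any
group `Ahat` with `ι : A →* Ahat` and `α : Ahat` with `ι a = α ^ n`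
satisfying the universal property of this pushout.  Then `Â` is locally
indicable. -/
theorem stmt_3 {A Ahat : Type} [Group A] [Group Ahat]
    (hfg : Group.FG A) (hA : LocallyIndicable A)
    (φ : A →* Multiplicative ℤ) (hφ : Function.Surjective φ)
    (a : A) (ha : φ a = Multiplicative.ofAdd 1)
    (n : ℕ) (hn : 0 < n)
    (ι : A →* Ahat) (α : Ahat) (hroot : ι a = α ^ n)
    (hUP : ∀ (Q : Type) [Group Q] (f : A →* Q) (β : Q), f a = β ^ n →
      ∃! h : Ahat →* Q, h.comp ι = f ∧ h α = β) :
    LocallyIndicable Ahat := by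
  classical
  -- map to the semidirect product
  obtain ⟨J, ⟨hJ1, hJ2⟩, -⟩ := hUP (G φ n ⋊[Θ φ a n hn] Multiplicative ℤ) (fA φ a n hn ha)
    (SemidirectProduct.inr (Multiplicative.ofAdd 1)) (by
      rw [← map_pow]
      apply SemidirectProduct.ext
      · have : kp φ a ha a = 1 := by
          apply Subtype.ext
          simp [kp, ha]
        change c φ a n hn 0 (kp φ a ha a) = _
        rw [this, map_one, SemidirectProduct.left_inr]
      · change Multiplicative.ofAdd (n * (φ a).toAdd) = _
        rw [SemidirectProduct.right_inr, ha, ← ofAdd_nsmul]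
        simp)
  -- map back
  let ψ : G φ n →* Ahat := Monoid.CoprodI.lift (fun i =>
    (MulAut.conj (α ^ i.1)).toMonoidHom.comp (ι.comp φ.ker.subtype))
  have hψ : ∀ (x : ℤ) (k : φ.ker), ψ (c φ a n hn x k) = α ^ x * ι k.1 * (α ^ x)⁻¹ := by
    intro x k
    rw [c_apply]
    simp only [ψ, Monoid.CoprodI.lift_of]
    change α ^ (x % n) * ι (MulAut.conjNormal (H := φ.ker) (a ^ (x / n)) k).1 * (α ^ (x % n))⁻¹ = _
    have hx : α ^ x = α ^ (x % n) * (α ^ n) ^ (x / n) := by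
      rw [← zpow_natCast, ← zpow_mul, ← zpow_add, Int.emod_add_mul_ediv]
    rw [MulAut.conjNormal_apply, map_mul, map_mul, map_inv, map_zpow, hroot, hx]
    simp only [mul_inv_rev, mul_assoc]
  let B : G φ n ⋊[Θ φ a n hn] Multiplicative ℤ →* Ahat :=
    SemidirectProduct.lift ψ (zpowersHom Ahat α) (by
      intro z
      apply Monoid.CoprodI.ext_hom
      intro i
      ext1 k
      simp only [MonoidHom.comp_apply, MulEquiv.coe_toMonoidHom]
      rw [← c_idx φ a n hn, Θ_apply, θ_c, hψ, hψ, add_comm, zpow_add, zpowersHom_apply,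
        MulAut.conj_apply]
      simp only [mul_inv_rev, mul_assoc])
  have hBJ : B.comp J = MonoidHom.id Ahat := by
    obtain ⟨_, -, hu⟩ := hUP Ahat ι α hroot
    rw [hu (B.comp J) ⟨?_, ?_⟩, hu (MonoidHom.id Ahat) ⟨rfl, rfl⟩]
    · rw [MonoidHom.comp_assoc, hJ1]
      ext x
      change ψ (c φ a n hn 0 (kp φ a ha x)) *
        zpowersHom Ahat α (Multiplicative.ofAdd (n * (φ x).toAdd)) = ι x
      rw [hψ, zpowersHom_apply]
      simp only [kp, map_mul, map_zpow, hroot, toAdd_ofAdd, zpow_mul, zpow_natCast]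
      simp
    · rw [MonoidHom.comp_apply, hJ2]
      simp [B]
  have hJinj : Function.Injective J := by
    intro x y h
    have := congrArg B h
    rwa [← MonoidHom.comp_apply, ← MonoidHom.comp_apply, hBJ] at this
  have hK : LocallyIndicable φ.ker := by
    intro H hH hne
    obtain ⟨h, hh⟩ := (Subgroup.ne_bot_iff_exists_ne_one (H := H)).1 hne
    exact surj_of_hom ((Group.fg_iff_subgroup_fg H).2 hH) hA (φ.ker.subtype.comp H.subtype) h
      (fun h1 => hh (Subtype.ext (Subtype.ext h1)))
  have hG : LocallyIndicable (G φ n) := coprod_LI hK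
  intro H hH hne
  have hH' : Group.FG H := (Group.fg_iff_subgroup_fg H).2 hH
  by_cases hr : ∃ h : H, (J h.1).right ≠ 1
  · obtain ⟨h, hh⟩ := hr
    exact surj_of_ne ((SemidirectProduct.rightHom.comp J).comp H.subtype) h hh
  push Not at hr
  obtain ⟨h, hh⟩ := (Subgroup.ne_bot_iff_exists_ne_one (H := H)).1 hne
  refine surj_of_hom hH' hG (MonoidHom.mk' (fun x : H => (J x.1).left) ?_) h ?_
  · intro x y
    rw [Subgroup.coe_mul, map_mul, SemidirectProduct.mul_left, hr x, map_one]
    rfl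
  · intro h1
    apply hh
    apply Subtype.ext
    apply hJinj
    rw [OneMemClass.coe_one, map_one]
    exact SemidirectProduct.ext h1 (hr h)
end

section
/- Let A be a group, φ : A → ℤ a surjective homomorphism, a ∈ A with φ(a) = 1, and n > 0 an integer. Let Â = A ∗_{⟨a = αⁿ⟩} ⟨α⟩ be the group obtained from A by adjoining an n-th root α of a, let ι : A → Â be the canonical homomorphism, and let φ̂ : Â → ℤ be the homomorphism determined by φ̂(ι(g)) = n·φ(g) for g ∈ A and φ̂(α) = 1. Then the kernel of φ̂ is generated by the union of the subgroups αⁱ ι(ker φ) α⁻ⁱ for i = 0, 1, …, n−1. -/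
/-- Let `A` be a group, `φ : A → ℤ` a surjective homomorphism, `a ∈ A` with
`φ a = 1` and `n > 0`.  Let `Â` be the group obtained from `A` by adjoining an
`n`-th root `α` of `a` (the pushout of `ℤ → A, 1 ↦ a` and `ℤ → ℤ, 1 ↦ n`),
presented here as any group `Ahat` with `ι : A →* Ahat` and `α : Ahat`,
`ι a = α ^ n`, satisfying the universal property of this pushout.  Let
`φ̂ : Â → ℤ` be the homomorphism with `φ̂ (ι g) = n • φ g` and `φ̂ α = 1`.
Then `ker φ̂` is generated by the union of the subgroups
`αⁱ ι(ker φ) α⁻ⁱ`, for `i = 0, 1, …, n − 1`. -/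
theorem stmt_4 {A Ahat : Type} [Group A] [Group Ahat]
    (φ : A →* Multiplicative ℤ) (hφ : Function.Surjective φ)
    (a : A) (ha : φ a = Multiplicative.ofAdd 1)
    (n : ℕ) (hn : 0 < n)
    (ι : A →* Ahat) (α : Ahat) (hroot : ι a = α ^ n)
    (hUP : ∀ (Q : Type) [Group Q] (f : A →* Q) (β : Q), f a = β ^ n →
      ∃! h : Ahat →* Q, h.comp ι = f ∧ h α = β)
    (φhat : Ahat →* Multiplicative ℤ)
    (hφhatι : ∀ g : A, φhat (ι g) = (φ g) ^ n)
    (hφhatα : φhat α = Multiplicative.ofAdd 1) :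
    φhat.ker = Subgroup.closure
      (⋃ i ∈ Finset.range n,
        (fun x : A => α ^ i * ι x * (α ^ i)⁻¹) '' (φ.ker : Set A)) := by
  set K := Subgroup.closure
      (⋃ i ∈ Finset.range n,
        (fun x : A => α ^ i * ι x * (α ^ i)⁻¹) '' (φ.ker : Set A)) with hK
  have hKle : K ≤ φhat.ker := by
    rw [hK, Subgroup.closure_le]
    intro y hy
    simp only [Set.mem_iUnion, Set.mem_image] at hy
    obtain ⟨i, -, x, hx, rfl⟩ := hy
    have hx' : φ x = 1 := hx
    simp [MonoidHom.mem_ker, hφhatι, hx']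
  have hgenZ : ∀ (i : ℤ) (x : A), φ x = 1 → α ^ i * ι x * (α ^ i)⁻¹ ∈ K := by
    intro i x hx
    have hn' : (0 : ℤ) < n := by exact_mod_cast hn
    obtain ⟨r, hr⟩ := Int.eq_ofNat_of_zero_le (Int.emod_nonneg i hn'.ne')
    have hrn : r < n := by
      have := Int.emod_lt_of_pos i hn'
      omega
    have hi : i = r + n * (i / n) := by
      have := Int.emod_add_mul_ediv i n
      omega
    have h1 : α ^ i = α ^ r * ι (a ^ (i / n)) := by
      rw [map_zpow, hroot, ← zpow_natCast α n, ← zpow_mul, ← zpow_natCast α r, ← zpow_add, ← hi]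
    have h2 : α ^ i * ι x * (α ^ i)⁻¹
        = α ^ r * ι (a ^ (i / n) * x * (a ^ (i / n))⁻¹) * (α ^ r)⁻¹ := by
      rw [h1]
      simp only [map_mul, map_inv, mul_inv_rev]
      group
    rw [h2]
    apply Subgroup.subset_closure
    simp only [Set.mem_iUnion]
    refine ⟨r, Finset.mem_range.2 hrn, _, ?_, rfl⟩
    simp [MonoidHom.mem_ker, hx]
  have hconj : ∀ (m : ℤ) (k : Ahat), k ∈ K → α ^ m * k * (α ^ m)⁻¹ ∈ K := by
    intro m k hk
    have hle : K ≤ K.comap (MulAut.conj (α ^ m)).toMonoidHom := by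
      conv_lhs => rw [hK]
      rw [Subgroup.closure_le]
      intro y hy
      simp only [Set.mem_iUnion, Set.mem_image] at hy
      obtain ⟨i, -, x, hx, rfl⟩ := hy
      have h3 := hgenZ (m + i) x hx
      have h4 : α ^ m * (α ^ i * ι x * (α ^ i)⁻¹) * (α ^ m)⁻¹
          = α ^ (m + i : ℤ) * ι x * (α ^ (m + i : ℤ))⁻¹ := by
        rw [zpow_add, zpow_natCast]
        simp only [mul_inv_rev, mul_assoc]
      show α ^ m * (α ^ i * ι x * (α ^ i)⁻¹) * (α ^ m)⁻¹ ∈ K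
      rw [h4]
      exact h3
    exact hle hk
  let T : Subgroup Ahat :=
    { carrier := {g | ∃ k ∈ K, ∃ m : ℤ, g = k * α ^ m}
      one_mem' := ⟨1, K.one_mem, 0, by simp⟩
      mul_mem' := by
        rintro _ _ ⟨k, hk, m, rfl⟩ ⟨l, hl, p, rfl⟩
        refine ⟨k * (α ^ m * l * (α ^ m)⁻¹), K.mul_mem hk (hconj m l hl), m + p, ?_⟩
        rw [zpow_add]
        group
      inv_mem' := by
        rintro _ ⟨k, hk, m, rfl⟩
        refine ⟨_, hconj (-m) _ (K.inv_mem hk), -m, ?_⟩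
        group }
  have hιT : ∀ g, ι g ∈ T := by
    intro g
    refine ⟨ι (g * (a ^ (φ g).toAdd)⁻¹), ?_, n * (φ g).toAdd, ?_⟩
    · have := hgenZ 0 (g * (a ^ (φ g).toAdd)⁻¹) (by
        rw [map_mul, map_inv, map_zpow, ha, ← ofAdd_zsmul]
        simp)
      simpa using this
    · rw [zpow_mul, zpow_natCast, ← hroot, ← map_zpow, ← map_mul]
      simp
  have hαT : α ∈ T := ⟨1, K.one_mem, 1, by simp⟩
  have hT : ∀ g, g ∈ T := by
    intro g
    obtain ⟨h, ⟨h1, h2⟩, -⟩ := hUP T (ι.codRestrict T hιT) ⟨α, hαT⟩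
      (by ext; simpa using hroot)
    have h3 : T.subtype.comp h = MonoidHom.id Ahat := by
      refine (hUP Ahat ι α hroot).unique ⟨?_, ?_⟩ ⟨?_, ?_⟩
      · rw [MonoidHom.comp_assoc, h1]; rfl
      · simp [h2]
      · rfl
      · rfl
    have h4 : ((h g : T) : Ahat) = g := DFunLike.congr_fun h3 g
    rw [← h4]
    exact (h g).2
  refine le_antisymm ?_ hKle
  intro g hg
  obtain ⟨k, hk, m, rfl⟩ := hT g
  have hk' : φhat k = 1 := hKle hk
  rw [MonoidHom.mem_ker, map_mul, hk', one_mul, map_zpow, hφhatα, ← ofAdd_zsmul] at hg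
  have hm : m = 0 := by simpa using hg
  simpa [hm] using hk
end

section
/- Let G be a group and N a normal subgroup of G. If N and G/N are both locally indicable, then G is locally indicable. -/
/-- An extension of locally indicable groups is locally indicable. -/
theorem stmt_5 {G : Type*} [Group G] (N : Subgroup G) [N.Normal]
    (hN : LocallyIndicable N) (hQ : LocallyIndicable (G ⧸ N)) :
    LocallyIndicable G := by
  intro H hfg hne
  by_cases h : H.map (QuotientGroup.mk' N) = ⊥
  · have hle : H ≤ N := by
      rw [Subgroup.map_eq_bot_iff, QuotientGroup.ker_mk'] at h
      exact h
    let e := Subgroup.subgroupOfEquivOfLe hle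
    have hfg' : (H.subgroupOf N).FG := by
      rw [← Group.fg_iff_subgroup_fg] at hfg ⊢
      exact Group.fg_of_surjective (f := e.symm.toMonoidHom) e.symm.surjective
    have hne' : H.subgroupOf N ≠ ⊥ := by
      intro hb
      apply hne
      rw [Subgroup.subgroupOf_eq_bot] at hb
      exact hb.eq_bot_of_le hle
    obtain ⟨f, hf⟩ := hN _ hfg' hne'
    exact ⟨f.comp e.symm.toMonoidHom, hf.comp e.symm.surjective⟩
  · have hfg' : (H.map (QuotientGroup.mk' N)).FG := by
      rw [← Group.fg_iff_subgroup_fg] at hfg ⊢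
      exact Group.fg_of_surjective (f := (QuotientGroup.mk' N).subgroupMap H)
        ((QuotientGroup.mk' N).subgroupMap_surjective H)
    obtain ⟨f, hf⟩ := hQ _ hfg' h
    exact ⟨f.comp ((QuotientGroup.mk' N).subgroupMap H),
      hf.comp ((QuotientGroup.mk' N).subgroupMap_surjective H)⟩
end

section
/- If A and B are locally indicable groups, then the free product A ∗ B is locally indicable. -/
open Monoid.Coprod in
/-- Elements `a₁ b₁ a₂ b₂ ⋯` in normal form starting with a nontrivial `A`-syllable. -/
inductive FPNormal {A B : Type*} [Group A] [Group B] : Monoid.Coprod A B → Prop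
  | base (a : A) (b : B) (ha : a ≠ 1) : FPNormal (inl a * inr b)
  | step (a : A) (b : B) (w : Monoid.Coprod A B) (ha : a ≠ 1) (hb : b ≠ 1) (hw : FPNormal w) :
      FPNormal (inl a * (inr b * w))

open Monoid.Coprod in
theorem fp_cases {A B : Type*} [Group A] [Group B] (w : Monoid.Coprod A B) :
    (∃ b : B, w = inr b) ∨ ∃ (b : B) (v : Monoid.Coprod A B), FPNormal v ∧ w = inr b * v := by
  induction w using Monoid.Coprod.induction_on' with
  | one => exact Or.inl ⟨1, by simp⟩
  | inr_mul n x ih =>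
    rcases ih with ⟨b, rfl⟩ | ⟨b, v, hv, rfl⟩
    · exact Or.inl ⟨n * b, by simp⟩
    · exact Or.inr ⟨n * b, v, hv, by simp [mul_assoc]⟩
  | inl_mul a x ih =>
    by_cases ha : a = 1
    · subst ha; simpa using ih
    rcases ih with ⟨b, rfl⟩ | ⟨b, v, hv, rfl⟩
    · exact Or.inr ⟨1, _, FPNormal.base a b ha, by simp⟩
    · by_cases hb : b = 1
      · subst hb
        cases hv with
        | base a' b' ha' =>
          by_cases h : a * a' = 1
          · refine Or.inl ⟨b', ?_⟩
            rw [map_one, one_mul, ← mul_assoc, ← map_mul, h, map_one, one_mul]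
          · refine Or.inr ⟨1, _, FPNormal.base (a * a') b' h, ?_⟩
            simp [mul_assoc]
        | step a' b' w ha' hb' hw =>
          by_cases h : a * a' = 1
          · refine Or.inr ⟨b', w, hw, ?_⟩
            rw [map_one, one_mul, ← mul_assoc, ← map_mul, h, map_one, one_mul]
          · refine Or.inr ⟨1, _, FPNormal.step (a * a') b' w h hb' hw, ?_⟩
            simp [mul_assoc]
      · exact Or.inr ⟨1, _, FPNormal.step a b v ha hb hv, by simp⟩

/-- Action of `A`. -/
def fpA (A B : Type*) [Group A] [Group B] :
    A →* Function.End ((A × B) × FreeGroup (A × B)) where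
  toFun a := fun q => ((a * q.1.1, q.1.2),
    FreeGroup.of (a * q.1.1, q.1.2) * ((FreeGroup.of q.1)⁻¹ * q.2))
  map_one' := by
    funext q
    simp [Function.End.one_def]
  map_mul' a b := by
    funext q
    refine Eq.trans ?_ (Function.comp_apply (x := q)).symm
    simp [mul_assoc]

/-- Action of `B`. -/
def fpB (A B : Type*) [Group A] [Group B] :
    B →* Function.End ((A × B) × FreeGroup (A × B)) where
  toFun b := fun q => ((q.1.1, b * q.1.2), q.2)
  map_one' := by
    funext q
    simp [Function.End.one_def]
  map_mul' a b := by
    funext q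
    refine Eq.trans ?_ (Function.comp_apply (x := q)).symm
    simp [mul_assoc]

/-- Action of the free product. -/
def fpR (A B : Type*) [Group A] [Group B] :
    Monoid.Coprod A B →* Function.End ((A × B) × FreeGroup (A × B)) :=
  Monoid.Coprod.lift (fpA A B) (fpB A B)

section
variable {A B : Type*} [Group A] [Group B]
open Monoid.Coprod

theorem fpR_mul (v w : Monoid.Coprod A B) (q) : fpR A B (v * w) q = fpR A B v (fpR A B w q) := by
  rw [map_mul]; rfl

theorem fpR_inl (a : A) (q) : fpR A B (inl a) q = ((a * q.1.1, q.1.2),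
    FreeGroup.of (a * q.1.1, q.1.2) * ((FreeGroup.of q.1)⁻¹ * q.2)) := rfl

theorem fpR_inr (b : B) (q) : fpR A B (inr b) q = ((q.1.1, b * q.1.2), q.2) := rfl

theorem fpR_fst (w : Monoid.Coprod A B) : ∀ q,
    (fpR A B w q).1 = (fst w * q.1.1, snd w * q.1.2) := by
  induction w using Monoid.Coprod.induction_on with
  | inl a => intro q; simp [fpR_inl]
  | inr a => intro q; simp [fpR_inr]
  | mul x y hx hy => intro q; simp [fpR_mul, hx, hy, mul_assoc]

theorem fpR_snd (w : Monoid.Coprod A B) : ∀ p f,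
    (fpR A B w (p, f)).2 = (fpR A B w (p, 1)).2 * f := by
  induction w using Monoid.Coprod.induction_on with
  | inl a => intro p f; simp [fpR_inl, mul_assoc]
  | inr a => intro p f; simp [fpR_inr]
  | mul x y hx hy =>
    intro p f
    have e : ∀ f, fpR A B y (p, f) = ((fpR A B y (p, f)).1, (fpR A B y (p, f)).2) := fun f => rfl
    rw [fpR_mul, fpR_mul, e f, e 1, hx, hy, hx _ (fpR A B y (p, 1)).2, fpR_fst, fpR_fst, mul_assoc]

theorem fp_reduced {w : Monoid.Coprod A B} (hw : FPNormal w) :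
    ∃ p L, fpR A B w (1, 1) = (p, FreeGroup.mk ((p, true) :: L)) ∧
      FreeGroup.IsReduced ((p, true) :: L) := by
  induction hw with
  | base a b ha =>
    refine ⟨(a, b), [((1, b), false)], ?_, ?_⟩
    · rw [fpR_mul, fpR_inr, fpR_inl]
      simp [FreeGroup.of, FreeGroup.invRev]
    · simp [FreeGroup.IsReduced, ha]
  | step a b w ha hb hw ih =>
    obtain ⟨p, L, h, hr⟩ := ih
    refine ⟨(a * p.1, b * p.2), ((p.1, b * p.2), false) :: (p, true) :: L, ?_, ?_⟩
    · rw [fpR_mul, fpR_mul, h, fpR_inr, fpR_inl]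
      simp [FreeGroup.of, FreeGroup.invRev]
    · rw [FreeGroup.isReduced_cons_cons, FreeGroup.isReduced_cons_cons]
      refine ⟨?_, ?_, hr⟩
      · simp [ha]
      · intro h
        have := congrArg Prod.snd h
        simp [hb] at this

theorem fp_trivial (w : Monoid.Coprod A B) (h2 : snd w = 1)
    (h : (fpR A B w (1, 1)).2 = 1) : w = 1 := by
  rcases fp_cases w with ⟨b, rfl⟩ | ⟨b, v, hv, rfl⟩
  · simp at h2; simp [h2]
  · exfalso
    obtain ⟨p, L, e, hr⟩ := fp_reduced hv
    rw [fpR_mul, e, fpR_inr] at h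
    have h' : FreeGroup.mk ((p, true) :: L) = FreeGroup.mk [] := h
    obtain ⟨c, h3, h4⟩ := FreeGroup.Red.exact.1 h'
    rw [hr.red_iff_eq] at h3
    rw [FreeGroup.Red.nil_iff] at h4
    simp_all

/-- The embedding into the free group. -/
def fpHom (H : Subgroup (Monoid.Coprod A B)) (h1 : ∀ x ∈ H, fst x = 1)
    (h2 : ∀ x ∈ H, snd x = 1) : H →* FreeGroup (A × B) where
  toFun x := (fpR A B x.1 (1, 1)).2
  map_one' := by simp [Function.End.one_def]
  map_mul' x y := by
    have e : fpR A B y.1 (1, 1) = (1, (fpR A B y.1 (1, 1)).2) := by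
      refine Prod.ext ?_ rfl
      rw [fpR_fst, h1 _ y.2, h2 _ y.2]; simp
    rw [Subgroup.coe_mul, fpR_mul, e, fpR_snd]

theorem free_indicable {F : Type*} [Group F] [IsFreeGroup F] [Nontrivial F] :
    ∃ f : F →* Multiplicative ℤ, Function.Surjective f := by
  have : Nonempty (IsFreeGroup.Generators F) := by
    by_contra hc
    rw [not_nonempty_iff] at hc
    have := (IsFreeGroup.toFreeGroup F).toEquiv.subsingleton
    exact not_subsingleton F this
  obtain ⟨i⟩ := this
  refine ⟨IsFreeGroup.lift (fun _ => Multiplicative.ofAdd 1), fun n => ?_⟩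
  refine ⟨IsFreeGroup.of i ^ (Multiplicative.toAdd n), ?_⟩
  rw [map_zpow, IsFreeGroup.lift_of, ← ofAdd_zsmul]
  simp

theorem indicable_of_map {G K : Type*} [Group G] [Group K] (hK : LocallyIndicable K)
    (φ : G →* K) (H : Subgroup G) (hH : H.FG) (h : H.map φ ≠ ⊥) :
    ∃ f : H →* Multiplicative ℤ, Function.Surjective f := by
  have hF : (H.map φ).FG := by
    classical
    obtain ⟨S, rfl⟩ := hH
    exact ⟨S.image φ, by rw [Finset.coe_image, MonoidHom.map_closure]⟩
  obtain ⟨f, hf⟩ := hK (H.map φ) hF h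
  exact ⟨f.comp (φ.subgroupMap H), hf.comp (φ.subgroupMap_surjective H)⟩

end

/-- The free product of two locally indicable groups is locally indicable. -/
theorem stmt_6 {A B : Type*} [Group A] [Group B]
    (hA : LocallyIndicable A) (hB : LocallyIndicable B) :
    LocallyIndicable (Monoid.Coprod A B) := by
  intro H hH hne
  by_cases h1 : H.map Monoid.Coprod.fst = ⊥
  swap
  · exact indicable_of_map hA _ H hH h1
  by_cases h2 : H.map Monoid.Coprod.snd = ⊥
  swap
  · exact indicable_of_map hB _ H hH h2
  rw [Subgroup.map_eq_bot_iff] at h1 h2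
  have hinj : Function.Injective (fpHom H (fun x hx => h1 hx) (fun x hx => h2 hx)) := by
    rw [injective_iff_map_eq_one]
    intro x hx
    exact Subtype.ext (fp_trivial x.1 (h2 x.2) hx)
  have : IsFreeGroup H := IsFreeGroup.ofMulEquiv (MonoidHom.ofInjective hinj).symm
  have : Nontrivial H := (Subgroup.nontrivial_iff_ne_bot H).2 hne
  exact free_indicable
end

section
/- Let A and B be groups, a ∈ A and b ∈ B, and let π : (A × B)/⟪(a,b)⟫ → (A/⟪a⟫) × (B/⟪b⟫) be the homomorphism induced by the identity map on A × B. Then the kernel of π is abelian and is generated by the two elements given by the images of (a, 1) and (1, b) in (A × B)/⟪(a,b)⟫; in particular, ker π is abelian of rank at most 2. -/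
/-- Let `A`, `B` be groups, `a ∈ A`, `b ∈ B`, and let
`π : (A × B)/⟪(a,b)⟫ → (A/⟪a⟫) × (B/⟪b⟫)` be the homomorphism induced by the
identity of `A × B` (characterized by `π ∘ mk = (mk, mk)`).  Then `ker π` is
abelian and is generated by the images of `(a, 1)` and `(1, b)`; in
particular it is abelian of rank at most `2`. -/
theorem stmt_8 {A B : Type*} [Group A] [Group B] (a : A) (b : B)
    (π : (A × B) ⧸ Subgroup.normalClosure {(a, b)} →*
      (A ⧸ Subgroup.normalClosure {a}) × (B ⧸ Subgroup.normalClosure {b}))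
    (hπ : ∀ p : A × B, π (QuotientGroup.mk p) =
      ((QuotientGroup.mk p.1 : A ⧸ Subgroup.normalClosure {a}),
       (QuotientGroup.mk p.2 : B ⧸ Subgroup.normalClosure {b}))) :
    (∀ x ∈ π.ker, ∀ y ∈ π.ker, x * y = y * x) ∧
    π.ker = Subgroup.closure
      {(QuotientGroup.mk ((a, 1) : A × B) :
          (A × B) ⧸ Subgroup.normalClosure {(a, b)}),
       (QuotientGroup.mk ((1, b) : A × B) :
          (A × B) ⧸ Subgroup.normalClosure {(a, b)})} := by
  set N := Subgroup.normalClosure {((a, b) : A × B)} with hN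
  set u : (A × B) ⧸ N := QuotientGroup.mk ((a, 1) : A × B) with hu
  set v : (A × B) ⧸ N := QuotientGroup.mk ((1, b) : A × B) with hv
  have huv : u * v = 1 := by
    rw [hu, hv, ← QuotientGroup.mk_mul, QuotientGroup.eq_one_iff]
    simpa using Subgroup.subset_normalClosure (Set.mem_singleton ((a, b) : A × B))
  have hu' : u = v⁻¹ := eq_inv_of_mul_eq_one_left huv
  have comm1 : ∀ y : B, Commute (QuotientGroup.mk ((1, y) : A × B) : (A × B) ⧸ N) u := by
    intro y
    change _ * _ = _ * _
    rw [hu, ← QuotientGroup.mk_mul, ← QuotientGroup.mk_mul]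
    simp
  have comm2 : ∀ x : A, Commute (QuotientGroup.mk ((x, 1) : A × B) : (A × B) ⧸ N) v := by
    intro x
    change _ * _ = _ * _
    rw [hv, ← QuotientGroup.mk_mul, ← QuotientGroup.mk_mul]
    simp
  have split : ∀ p : A × B, (QuotientGroup.mk p : (A × B) ⧸ N) =
      QuotientGroup.mk ((p.1, 1) : A × B) * QuotientGroup.mk ((1, p.2) : A × B) := by
    intro p
    rw [← QuotientGroup.mk_mul]
    simp
  have huc : u ∈ Subgroup.center ((A × B) ⧸ N) := by
    rw [Subgroup.mem_center_iff]
    intro g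
    induction g using QuotientGroup.induction_on with
    | H p =>
      rw [split p]
      refine Commute.mul_left ?_ (comm1 p.2)
      rw [hu']
      exact (comm2 p.1).inv_right
  have hvc : v ∈ Subgroup.center ((A × B) ⧸ N) := by
    have : v = u⁻¹ := by rw [hu', inv_inv]
    rw [this]
    exact inv_mem huc
  have hC : Subgroup.closure {u, v} ≤ Subgroup.center ((A × B) ⧸ N) := by
    rw [Subgroup.closure_le]
    rintro x (rfl | rfl)
    · exact huc
    · exact hvc
  have hCn : (Subgroup.closure {u, v}).Normal := by
    constructor
    intro n hn g
    have := Subgroup.mem_center_iff.1 (hC hn) g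
    rw [this, mul_inv_cancel_right]
    exact hn
  have hA : Subgroup.normalClosure {a} ≤ (Subgroup.closure {u, v}).comap
      ((QuotientGroup.mk' N).comp (MonoidHom.inl A B)) := by
    apply Subgroup.normalClosure_le_normal
    rintro x rfl
    exact Subgroup.subset_closure (Or.inl rfl)
  have hB : Subgroup.normalClosure {b} ≤ (Subgroup.closure {u, v}).comap
      ((QuotientGroup.mk' N).comp (MonoidHom.inr A B)) := by
    apply Subgroup.normalClosure_le_normal
    rintro x rfl
    exact Subgroup.subset_closure (Or.inr rfl)
  have key : π.ker = Subgroup.closure {u, v} := by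
    apply le_antisymm
    · intro g hg
      induction g using QuotientGroup.induction_on with
      | H p =>
        rw [MonoidHom.mem_ker, hπ, Prod.mk_eq_one, QuotientGroup.eq_one_iff,
          QuotientGroup.eq_one_iff] at hg
        rw [split p]
        exact mul_mem (hA hg.1) (hB hg.2)
    · rw [Subgroup.closure_le]
      rintro x (rfl | rfl)
      · change π _ = 1
        rw [hu, hπ, Prod.mk_eq_one, QuotientGroup.eq_one_iff, QuotientGroup.eq_one_iff]
        exact ⟨Subgroup.subset_normalClosure rfl, one_mem _⟩
      · change π _ = 1
        rw [hv, hπ, Prod.mk_eq_one, QuotientGroup.eq_one_iff, QuotientGroup.eq_one_iff]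
        exact ⟨one_mem _, Subgroup.subset_normalClosure rfl⟩
  refine ⟨fun x _ y hy => ?_, key⟩
  rw [key] at hy
  exact Subgroup.mem_center_iff.1 (hC hy) x
end

section
/- Let H be the group with presentation ⟨x, y | x y x⁻¹ = y⁻¹⟩ (the Klein bottle group). In the direct product H × H, both elements (y², 1) and (1, y²) belong to the normal closure of (y, y). Moreover, since y² ≠ 1 in H, the homomorphism H → (H × H)/⟪(y, y)⟫ sending h to the class of (h, 1) is not injective, and likewise the homomorphism sending h to the class of (1, h) is not injective. -/
/-- The single defining relator `x y x⁻¹ y` of the Klein bottle group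
`⟨x, y | x y x⁻¹ = y⁻¹⟩`, with generators indexed by `Bool`
(`true ↦ x`, `false ↦ y`). -/
def kleinRels : Set (FreeGroup Bool) :=
  {FreeGroup.of true * FreeGroup.of false * (FreeGroup.of true)⁻¹ * FreeGroup.of false}

/-- The Klein bottle group `⟨x, y | x y x⁻¹ = y⁻¹⟩`. -/
def KleinBottleGroup : Type :=
  PresentedGroup kleinRels

instance : Group KleinBottleGroup :=
  QuotientGroup.Quotient.group _

/-- The generator `y` of the Klein bottle group. -/
def kleinY : KleinBottleGroup :=
  PresentedGroup.of false

theorem klein_rel (x : KleinBottleGroup) (hx : x = (PresentedGroup.of true : PresentedGroup kleinRels)) :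
    x * kleinY * x⁻¹ = kleinY⁻¹ := by
  subst hx
  apply eq_inv_of_mul_eq_one_left
  exact PresentedGroup.one_of_mem (rels := kleinRels) (Set.mem_singleton _)

theorem klein_sq_ne : kleinY ^ 2 ≠ 1 := by
  let f : Bool → Equiv.Perm (Fin 3) := fun b => if b then Equiv.swap 0 1 else finRotate 3
  have hf : ∀ r ∈ kleinRels, FreeGroup.lift f r = 1 := by
    intro r hr
    rw [kleinRels, Set.mem_singleton_iff] at hr
    subst hr
    simp only [map_mul, map_inv, FreeGroup.lift_apply_of, f]
    decide
  intro h
  have h2 : (PresentedGroup.toGroup hf) ((PresentedGroup.of false) ^ 2) = 1 :=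
    (congrArg (PresentedGroup.toGroup hf) h).trans (map_one _)
  rw [map_pow, PresentedGroup.toGroup.of] at h2
  revert h2
  simp only [f]
  decide

/-- In `H × H`, where `H` is the Klein bottle group `⟨x, y | x y x⁻¹ = y⁻¹⟩`,
the elements `(y², 1)` and `(1, y²)` lie in the normal closure of `(y, y)`;
moreover `y² ≠ 1` in `H`, and the maps `h ↦ (h, 1)` and `h ↦ (1, h)` into
`(H × H)/⟪(y, y)⟫` are not injective. -/
theorem stmt_13 :
    ((kleinY ^ 2, (1 : KleinBottleGroup)) ∈
      Subgroup.normalClosure {((kleinY, kleinY) : KleinBottleGroup × KleinBottleGroup)}) ∧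
    (((1 : KleinBottleGroup), kleinY ^ 2) ∈
      Subgroup.normalClosure {((kleinY, kleinY) : KleinBottleGroup × KleinBottleGroup)}) ∧
    kleinY ^ 2 ≠ 1 ∧
    ¬Function.Injective (fun h : KleinBottleGroup =>
      (QuotientGroup.mk (h, (1 : KleinBottleGroup)) :
        (KleinBottleGroup × KleinBottleGroup) ⧸
          Subgroup.normalClosure {((kleinY, kleinY) :
            KleinBottleGroup × KleinBottleGroup)})) ∧
    ¬Function.Injective (fun h : KleinBottleGroup =>
      (QuotientGroup.mk ((1 : KleinBottleGroup), h) :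
        (KleinBottleGroup × KleinBottleGroup) ⧸
          Subgroup.normalClosure {((kleinY, kleinY) :
            KleinBottleGroup × KleinBottleGroup)})) := by
  have hm : ((kleinY, kleinY) : KleinBottleGroup × KleinBottleGroup) ∈
      Subgroup.normalClosure {((kleinY, kleinY) : KleinBottleGroup × KleinBottleGroup)} :=
    Subgroup.subset_normalClosure (Set.mem_singleton _)
  obtain ⟨x, hx⟩ : ∃ x : KleinBottleGroup, x * kleinY * x⁻¹ = kleinY⁻¹ := ⟨_, klein_rel _ rfl⟩
  have h1 : ((kleinY ^ 2, (1 : KleinBottleGroup)) ∈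
      Subgroup.normalClosure {((kleinY, kleinY) : KleinBottleGroup × KleinBottleGroup)}) := by
    have := mul_mem hm (Subgroup.normalClosure_normal.conj_mem _ hm (1, x))
    simpa [hx, pow_two] using this
  have h2 : (((1 : KleinBottleGroup), kleinY ^ 2) ∈
      Subgroup.normalClosure {((kleinY, kleinY) : KleinBottleGroup × KleinBottleGroup)}) := by
    have := mul_mem hm (Subgroup.normalClosure_normal.conj_mem _ hm (x, 1))
    simpa [hx, pow_two] using this
  refine ⟨h1, h2, klein_sq_ne, fun hi => klein_sq_ne (hi ?_), fun hi => klein_sq_ne (hi ?_)⟩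
  · exact (QuotientGroup.eq_one_iff _).2 h1
  · exact (QuotientGroup.eq_one_iff _).2 h2
end
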